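/- Let V, W : B̄_r → ℝ^m be smooth vector fields on the closed ball B̄_r ⊂ ℝ^m, both flat at the origin, and let [V,W] := (DW)·V − (DV)·W denote their Lie bracket. Then for all n, k, l ∈ ℕ there exists a constant C = C(n,k,l,r) > 0, depending continuously on r, such that ⟨[V,W]⟩_{n,k+l,r} ≤ C · ( ⟨V⟩_{0,k,r} · ⟨W⟩_{n+1,l,r} + ⟨V⟩_{n+1,k,r} · ⟨W⟩_{0,l,r} ). Moreover, the same inequality with l = 0 holds when W is an arbitrary smooth vector field on B̄_r (not necessarily flat), with ⟨W⟩_{·,0,r} the usual C^n norm. -/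

import Mathlib

open Metric Set

/-- The weighted norm `⟨V⟩_{n,k,r}` on vector fields on the closed ball that are flat
at the origin (weight `k = 0` recovers the usual `C^n` norm). -/
noncomputable def flatVNorm (m : ℕ) (r : ℝ) (n k : ℕ)
    (V : EuclideanSpace ℝ (Fin m) → EuclideanSpace ℝ (Fin m)) : ℝ :=
  ⨆ p : (closedBall (0 : EuclideanSpace ℝ (Fin m)) r \ {0} :
      Set (EuclideanSpace ℝ (Fin m))) × Fin (n + 1),
    ‖(p.1 : EuclideanSpace ℝ (Fin m))‖ ^ (-(k : ℤ)) *
      ‖iteratedFDerivWithin ℝ p.2 V (closedBall 0 r) p.1‖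

/-- A smooth vector field on the closed ball. -/
def SmoothVF (m : ℕ) (r : ℝ)
    (V : EuclideanSpace ℝ (Fin m) → EuclideanSpace ℝ (Fin m)) : Prop :=
  ContDiffOn ℝ (⊤ : ℕ∞) V (closedBall 0 r)

/-- A vector field flat at the origin. -/
def FlatVF (m : ℕ) (r : ℝ)
    (V : EuclideanSpace ℝ (Fin m) → EuclideanSpace ℝ (Fin m)) : Prop :=
  ∀ i : ℕ, iteratedFDerivWithin ℝ i V (closedBall 0 r) 0 = 0

/-- The Lie bracket `[V,W] = (DW)·V − (DV)·W` of vector fields on the closed ball. -/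
noncomputable def lieBracket (m : ℕ) (r : ℝ)
    (V W : EuclideanSpace ℝ (Fin m) → EuclideanSpace ℝ (Fin m))
    (x : EuclideanSpace ℝ (Fin m)) : EuclideanSpace ℝ (Fin m) :=
  fderivWithin ℝ W (closedBall 0 r) x (V x) -
    fderivWithin ℝ V (closedBall 0 r) x (W x)

/-!
Landau's inequality bounds a derivative by the two neighbouring ones: a function `f` on a ball of
radius `ρ` satisfies `‖Df‖ ≤ sup ‖f‖ / ρ + 2ρ sup ‖D²f‖`. To keep the weight `‖x‖ ^ k` it is
applied on a ball of radius `h ≤ ‖x‖` contained in the ball of radius `‖x‖`; when `‖x‖ < h`, the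
mean value inequality between `0` and `x` does better. Optimizing over `h ∈ (0, 1]` gives
`⟨f⟩_{i+1}² ≤ L² ⟨f⟩_i ⟨f⟩_{i+2}` with `L = 4 (1 + 1 / r)`, so that `i ↦ L ^ i² ⟨f⟩_i` is
log-convex. A product of a log-convex sequence with a reversed one is log-convex, hence largest at
an end point, and this bounds each Leibniz term `⟨V⟩_i ⟨W⟩_j` of the bracket by the two extreme
ones.
-/

section LogConvex

theorem le_max_of_two_mul_le_add {d : ℕ → ℝ} {n : ℕ}
    (hd : ∀ i, i + 2 ≤ n → 2 * d (i + 1) ≤ d i + d (i + 2)) {i : ℕ} (hi : i ≤ n) :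
    d i ≤ max (d 0) (d n) := by
  induction n generalizing i with
  | zero => rw [Nat.le_zero.mp hi, max_self]
  | succ n ih =>
    have ih_le {j : ℕ} (hj : j ≤ n) : d j ≤ max (d 0) (d n) :=
      ih (fun j hj => hd j (by lia)) hj
    have last_le : d n ≤ max (d 0) (d (n + 1)) := by
      cases n with
      | zero => exact le_max_left _ _
      | succ n =>
        rcases le_total (d (n + 1)) (d 0) with h | h
        · exact le_max_of_le_left h
        · have prev_le : d n ≤ d (n + 1) := (ih_le n.le_succ).trans_eq (max_eq_right h)
          exact le_max_of_le_right (by linarith [hd n le_rfl])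
    rcases hi.eq_or_lt with rfl | hi
    · exact le_max_right _ _
    · exact (ih_le (Nat.le_of_lt_succ hi)).trans (max_le (le_max_left _ _) last_le)

theorem mul_le_add_of_sq_le_mul {a b : ℕ → ℝ} (ha₀ : ∀ i, 0 ≤ a i) (hb₀ : ∀ i, 0 ≤ b i) {n : ℕ}
    (ha : ∀ i, i + 2 ≤ n → a (i + 1) ^ 2 ≤ a i * a (i + 2))
    (hb : ∀ i, i + 2 ≤ n → b (i + 1) ^ 2 ≤ b i * b (i + 2)) {i j : ℕ} (hij : i + j = n) :
    a i * b j ≤ a 0 * b n + a n * b 0 := by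
  have convex : ∀ p, p + 2 ≤ n →
      2 * (a (p + 1) * b (n - (p + 1))) ≤ a p * b (n - p) + a (p + 2) * b (n - (p + 2)) := by
    intro p hp
    obtain ⟨q, rfl⟩ := Nat.exists_eq_add_of_le hp
    rw [show p + 2 + q - (p + 1) = q + 1 by lia, show p + 2 + q - p = q + 2 by lia,
      show p + 2 + q - (p + 2) = q by lia]
    refine two_mul_le_add_of_sq_le_mul (mul_nonneg (ha₀ _) (hb₀ _))
      (mul_nonneg (ha₀ _) (hb₀ _)) ?_
    calc (a (p + 1) * b (q + 1)) ^ 2 = a (p + 1) ^ 2 * b (q + 1) ^ 2 := mul_pow _ _ _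
      _ ≤ (a p * a (p + 2)) * (b q * b (q + 2)) :=
        mul_le_mul (ha p hp) (hb q (by lia)) (sq_nonneg _) (mul_nonneg (ha₀ _) (ha₀ _))
      _ = a p * b (q + 2) * (a (p + 2) * b q) := by ring
  have le_max := le_max_of_two_mul_le_add (d := fun p => a p * b (n - p)) convex
    (show i ≤ n by lia)
  simp only [tsub_zero, tsub_self, show n - i = j by lia] at le_max
  exact le_max.trans (max_le_add_of_nonneg (mul_nonneg (ha₀ _) (hb₀ _))
    (mul_nonneg (ha₀ _) (hb₀ _)))

theorem sq_pow_sq_mul_le {a : ℕ → ℝ} {L : ℝ} {i : ℕ} (hL : 0 ≤ L)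
    (ha : a (i + 1) ^ 2 ≤ L ^ 2 * (a i * a (i + 2))) :
    (L ^ (i + 1) ^ 2 * a (i + 1)) ^ 2 ≤ L ^ i ^ 2 * a i * (L ^ (i + 2) ^ 2 * a (i + 2)) :=
  calc (L ^ (i + 1) ^ 2 * a (i + 1)) ^ 2 = L ^ (2 * (i + 1) ^ 2) * a (i + 1) ^ 2 := by ring
    _ ≤ L ^ (2 * (i + 1) ^ 2) * (L ^ 2 * (a i * a (i + 2))) := by gcongr
    _ = L ^ i ^ 2 * a i * (L ^ (i + 2) ^ 2 * a (i + 2)) := by ring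

theorem mul_le_pow_mul_add_of_sq_le {a b : ℕ → ℝ} (ha₀ : ∀ i, 0 ≤ a i) (hb₀ : ∀ i, 0 ≤ b i)
    {n : ℕ} {L : ℝ} (hL : 1 ≤ L)
    (ha : ∀ i, i + 2 ≤ n → a (i + 1) ^ 2 ≤ L ^ 2 * (a i * a (i + 2)))
    (hb : ∀ i, i + 2 ≤ n → b (i + 1) ^ 2 ≤ L ^ 2 * (b i * b (i + 2)))
    {i j : ℕ} (hij : i + j = n) :
    a i * b j ≤ L ^ n ^ 2 * (a 0 * b n + a n * b 0) := by
  have hL₀ : 0 ≤ L := zero_le_one.trans hL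
  have le_rescaled {c : ℝ} (hc : 0 ≤ c) (p : ℕ) : c ≤ L ^ p ^ 2 * c :=
    le_mul_of_one_le_left hc (one_le_pow₀ hL)
  have rescaled_nonneg {c : ℕ → ℝ} (hc : ∀ p, 0 ≤ c p) (p : ℕ) : 0 ≤ L ^ p ^ 2 * c p :=
    mul_nonneg (pow_nonneg hL₀ _) (hc p)
  calc a i * b j ≤ (L ^ i ^ 2 * a i) * (L ^ j ^ 2 * b j) :=
        mul_le_mul (le_rescaled (ha₀ i) i) (le_rescaled (hb₀ j) j) (hb₀ j)
          (rescaled_nonneg ha₀ i)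
    _ ≤ (L ^ 0 ^ 2 * a 0) * (L ^ n ^ 2 * b n) + (L ^ n ^ 2 * a n) * (L ^ 0 ^ 2 * b 0) :=
        mul_le_add_of_sq_le_mul (a := fun p => L ^ p ^ 2 * a p) (b := fun p => L ^ p ^ 2 * b p)
          (rescaled_nonneg ha₀) (rescaled_nonneg hb₀) (fun p hp => sq_pow_sq_mul_le hL₀ (ha p hp))
          (fun p hp => sq_pow_sq_mul_le hL₀ (hb p hp)) hij
    _ = L ^ n ^ 2 * (a 0 * b n + a n * b 0) := by ring

theorem sq_le_of_forall_le_div_add_mul {x y z C : ℝ} (hx : 0 ≤ x) (hxz : x ≤ z) (hy : 0 ≤ y)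
    (hC : 0 ≤ C) (hxyz : ∀ h, 0 < h → h ≤ 1 → y ≤ C * (x / h + h * z)) :
    y ^ 2 ≤ (2 * C) ^ 2 * (x * z) := by
  -- The optimal `h = √(x / z)` may vanish, so `x` and `z` are first increased by `ε > 0`.
  have perturbed : ∀ ε > 0, y ^ 2 ≤ (2 * C) ^ 2 * ((x + ε) * (z + ε)) := by
    intro ε hε
    set s := √(x + ε)
    set t := √(z + ε)
    have hs : 0 < s := Real.sqrt_pos.mpr (by linarith)
    have ht : 0 < t := Real.sqrt_pos.mpr (by linarith)
    have hs_sq : s ^ 2 = x + ε := Real.sq_sqrt (by linarith)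
    have ht_sq : t ^ 2 = z + ε := Real.sq_sqrt (by linarith)
    have hst : s / t ≤ 1 := (div_le_one ht).mpr (Real.sqrt_le_sqrt (by linarith))
    have y_le : y ≤ 2 * C * (s * t) :=
      calc y ≤ C * (x / (s / t) + s / t * z) := hxyz _ (div_pos hs ht) hst
        _ ≤ C * (s ^ 2 / (s / t) + s / t * t ^ 2) := by gcongr <;> linarith
        _ = 2 * C * (s * t) := by field_simp; ring
    calc y ^ 2 ≤ (2 * C * (s * t)) ^ 2 := by gcongr
      _ = (2 * C) ^ 2 * ((x + ε) * (z + ε)) := by rw [← hs_sq, ← ht_sq]; ring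
  have tendsto_zero : Filter.Tendsto (fun ε : ℝ => (2 * C) ^ 2 * ((x + ε) * (z + ε)))
      (nhdsWithin 0 (Ioi 0)) (nhds ((2 * C) ^ 2 * (x * z))) := by
    refine (Continuous.tendsto' ?_ 0 _ (by simp only [add_zero])).mono_left nhdsWithin_le_nhds
    fun_prop
  exact ge_of_tendsto tendsto_zero (Filter.eventually_of_mem self_mem_nhdsWithin perturbed)

end LogConvex

section Landau

variable {E F : Type*} [NormedAddCommGroup E] [NormedSpace ℝ E]
  [NormedAddCommGroup F] [NormedSpace ℝ F]

theorem uniqueDiffOn_closedBall (c : E) {r : ℝ} (hr : 0 < r) :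
    UniqueDiffOn ℝ (closedBall c r) :=
  uniqueDiffOn_convex (convex_closedBall c r)
    ⟨c, ball_subset_interior_closedBall (mem_ball_self hr)⟩

theorem exists_mem_closedBall_subset_closedBall {a x : E} {R ρ : ℝ} (hx : x ∈ closedBall a R)
    (hρ : 0 < ρ) (hρR : ρ ≤ R) :
    ∃ c, x ∈ closedBall c ρ ∧ closedBall c ρ ⊆ closedBall a R := by
  have hR : 0 < R := hρ.trans_le hρR
  have hratio : ρ / R ≤ 1 := (div_le_one hR).mpr hρR
  refine ⟨AffineMap.lineMap x a (ρ / R), ?_, closedBall_subset_closedBall' ?_⟩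
  · rw [mem_closedBall, dist_left_lineMap, Real.norm_of_nonneg (by positivity)]
    calc ρ / R * dist x a ≤ ρ / R * R := by gcongr; exact hx
      _ = ρ := div_mul_cancel₀ ρ hR.ne'
  · rw [dist_lineMap_right, Real.norm_of_nonneg (sub_nonneg.mpr hratio)]
    calc ρ + (1 - ρ / R) * dist x a ≤ ρ + (1 - ρ / R) * R := by
          gcongr
          exact hx
      _ = R := by field_simp; ring

theorem opNorm_le_div_add_of_hasFDerivWithinAt {f : E → F} {f' : E → E →L[ℝ] F} {φ : E →L[ℝ] F}
    {c : E} {ρ A ω : ℝ} (hρ : 0 < ρ)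
    (hf : ∀ z ∈ closedBall c ρ, HasFDerivWithinAt f (f' z) (closedBall c ρ) z)
    (hA : ∀ z ∈ closedBall c ρ, ‖f z‖ ≤ A) (hω : ∀ z ∈ closedBall c ρ, ‖f' z - φ‖ ≤ ω) :
    ‖φ‖ ≤ A / ρ + ω := by
  have hc : c ∈ closedBall c ρ := mem_closedBall_self hρ.le
  have hA₀ : 0 ≤ A := (norm_nonneg _).trans (hA c hc)
  have hω₀ : 0 ≤ ω := (norm_nonneg _).trans (hω c hc)
  refine φ.opNorm_le_of_unit_norm (by positivity) fun u hu => ?_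
  have norm_diameter : ‖(2 * ρ) • u‖ = 2 * ρ := by
    rw [norm_smul, hu, Real.norm_of_nonneg (by positivity), mul_one]
  have add_mem : c + ρ • u ∈ closedBall c ρ := by
    simp [mem_closedBall, norm_smul, hu, abs_of_pos hρ]
  have sub_mem : c - ρ • u ∈ closedBall c ρ := by
    simp [mem_closedBall, norm_smul, hu, abs_of_pos hρ]
  have remainder_le :=
    (convex_closedBall c ρ).norm_image_sub_le_of_norm_hasFDerivWithin_le' hf hω sub_mem add_mem
  rw [show c + ρ • u - (c - ρ • u) = (2 * ρ) • u by module, norm_diameter] at remainder_le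
  have diameter_le : 2 * ρ * ‖φ u‖ ≤ A + A + ω * (2 * ρ) :=
    calc 2 * ρ * ‖φ u‖ = ‖φ ((2 * ρ) • u)‖ := by
          rw [map_smul, norm_smul, Real.norm_of_nonneg (by positivity)]
      _ ≤ ‖f (c + ρ • u) - f (c - ρ • u)‖
          + ‖f (c + ρ • u) - f (c - ρ • u) - φ ((2 * ρ) • u)‖ := norm_le_norm_add_norm_sub _ _
      _ ≤ A + A + ω * (2 * ρ) :=
          add_le_add ((norm_sub_le _ _).trans (add_le_add (hA _ add_mem) (hA _ sub_mem)))
            remainder_le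
  calc ‖φ u‖ ≤ (A + A + ω * (2 * ρ)) / (2 * ρ) := by
        rw [le_div_iff₀ (by positivity)]; linarith
    _ = A / ρ + ω := by field_simp; ring

variable {s : Set E} {f : E → F} {i : ℕ}

theorem hasFDerivWithinAt_iteratedFDerivWithin (hs : UniqueDiffOn ℝ s)
    (hf : ContDiffOn ℝ (i + 1 : ℕ) f s) {x : E} (hx : x ∈ s) :
    HasFDerivWithinAt (iteratedFDerivWithin ℝ i f s)
      (fderivWithin ℝ (iteratedFDerivWithin ℝ i f s) s x) s x :=
  (hf.differentiableOn_iteratedFDerivWithin (by exact_mod_cast i.lt_succ_self) hs x hx)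
    |>.hasFDerivWithinAt

theorem norm_iteratedFDerivWithin_sub_le (hs : UniqueDiffOn ℝ s)
    (hf : ContDiffOn ℝ (i + 1 : ℕ) f s) {t : Set E} (ht : Convex ℝ t) (hts : t ⊆ s) {B : ℝ}
    (hB : ∀ z ∈ t, ‖iteratedFDerivWithin ℝ (i + 1) f s z‖ ≤ B) {x y : E} (hx : x ∈ t)
    (hy : y ∈ t) :
    ‖iteratedFDerivWithin ℝ i f s y - iteratedFDerivWithin ℝ i f s x‖ ≤ B * ‖y - x‖ :=
  ht.norm_image_sub_le_of_norm_hasFDerivWithin_le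
    (fun _ hz => (hasFDerivWithinAt_iteratedFDerivWithin hs hf (hts hz)).mono hts)
    (fun z hz => norm_fderivWithin_iteratedFDerivWithin.trans_le (hB z hz)) hx hy

theorem norm_iteratedFDerivWithin_succ_le (hs : UniqueDiffOn ℝ s)
    (hf : ContDiffOn ℝ (i + 2 : ℕ) f s) {a : E} {R ρ A B : ℝ} (hRs : closedBall a R ⊆ s)
    (hρ : 0 < ρ) (hρR : ρ ≤ R)
    (hA : ∀ y ∈ closedBall a R, ‖iteratedFDerivWithin ℝ i f s y‖ ≤ A)
    (hB : ∀ y ∈ closedBall a R, ‖iteratedFDerivWithin ℝ (i + 2) f s y‖ ≤ B)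
    {x : E} (hx : x ∈ closedBall a R) :
    ‖iteratedFDerivWithin ℝ (i + 1) f s x‖ ≤ A / ρ + 2 * ρ * B := by
  obtain ⟨c, hxc, hcR⟩ := exists_mem_closedBall_subset_closedBall hx hρ hρR
  have hB₀ : 0 ≤ B := (norm_nonneg _).trans (hB x hx)
  rw [← norm_fderivWithin_iteratedFDerivWithin]
  refine opNorm_le_div_add_of_hasFDerivWithinAt hρ
    (fun z hz => (hasFDerivWithinAt_iteratedFDerivWithin hs
      (hf.of_le (by exact_mod_cast (i + 1).le_succ)) (hRs (hcR hz))).mono (hcR.trans hRs))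
    (fun z hz => hA z (hcR hz)) fun z hz => ?_
  have dist_le : ‖z - x‖ ≤ 2 * ρ := by
    rw [← dist_eq_norm]
    linarith [dist_triangle_right z x c, mem_closedBall.mp hz, mem_closedBall.mp hxc]
  rw [fderivWithin_iteratedFDerivWithin, Function.comp_apply, Function.comp_apply,
    ← LinearIsometryEquiv.map_sub, LinearIsometryEquiv.norm_map]
  calc ‖iteratedFDerivWithin ℝ (i + 1) f s z - iteratedFDerivWithin ℝ (i + 1) f s x‖
      ≤ B * ‖z - x‖ := norm_iteratedFDerivWithin_sub_le hs hf (convex_closedBall a R) hRs hB hx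
        (hcR hz)
    _ ≤ 2 * ρ * B := by rw [mul_comm]; gcongr

end Landau

section Leibniz

variable {E F : Type*} [NormedAddCommGroup E] [NormedSpace ℝ E]
  [NormedAddCommGroup F] [NormedSpace ℝ F] {s : Set E} {n : ℕ} {x : E} {T : ℝ}

theorem contDiffOn_fderivWithin_apply_field (hs : UniqueDiffOn ℝ s) {V : E → E} {W : E → F}
    (hV : ContDiffOn ℝ (n + 1 : ℕ) V s) (hW : ContDiffOn ℝ (n + 1 : ℕ) W s) :
    ContDiffOn ℝ n (fun y => fderivWithin ℝ W s y (V y)) s :=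
  (hW.fderivWithin hs (by norm_cast)).clm_apply (hV.of_le (by exact_mod_cast n.le_succ))

theorem norm_iteratedFDerivWithin_fderivWithin_apply_le (hs : UniqueDiffOn ℝ s) {V : E → E}
    {W : E → F} (hV : ContDiffOn ℝ (n + 1 : ℕ) V s) (hW : ContDiffOn ℝ (n + 1 : ℕ) W s)
    (hx : x ∈ s)
    (hT : ∀ i j, i + j = n + 1 →
      ‖iteratedFDerivWithin ℝ i V s x‖ * ‖iteratedFDerivWithin ℝ j W s x‖ ≤ T) :
    ‖iteratedFDerivWithin ℝ n (fun y => fderivWithin ℝ W s y (V y)) s x‖ ≤ 2 ^ n * T :=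
  calc ‖iteratedFDerivWithin ℝ n (fun y => fderivWithin ℝ W s y (V y)) s x‖
      ≤ ∑ i ∈ Finset.range (n + 1), (n.choose i : ℝ) *
          ‖iteratedFDerivWithin ℝ i (fderivWithin ℝ W s) s x‖ *
          ‖iteratedFDerivWithin ℝ (n - i) V s x‖ :=
        norm_iteratedFDerivWithin_clm_apply (hW.fderivWithin hs (by norm_cast))
          (hV.of_le (by exact_mod_cast n.le_succ)) hs hx le_rfl
    _ ≤ ∑ i ∈ Finset.range (n + 1), (n.choose i : ℝ) * T := by
        refine Finset.sum_le_sum fun i hi => ?_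
        have hin : i < n + 1 := Finset.mem_range.mp hi
        rw [norm_iteratedFDerivWithin_fderivWithin hs hx, mul_assoc, mul_comm ‖_‖]
        gcongr
        exact hT _ _ (by lia)
    _ = 2 ^ n * T := by
        rw [← Finset.sum_mul]
        exact_mod_cast congrArg (· * T) (congrArg Nat.cast (Nat.sum_range_choose n))

theorem norm_iteratedFDerivWithin_lieBracketWithin_le (hs : UniqueDiffOn ℝ s) {V W : E → E}
    (hV : ContDiffOn ℝ (n + 1 : ℕ) V s) (hW : ContDiffOn ℝ (n + 1 : ℕ) W s) (hx : x ∈ s)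
    (hT : ∀ i j, i + j = n + 1 →
      ‖iteratedFDerivWithin ℝ i V s x‖ * ‖iteratedFDerivWithin ℝ j W s x‖ ≤ T) :
    ‖iteratedFDerivWithin ℝ n (VectorField.lieBracketWithin ℝ V W s) s x‖ ≤ 2 ^ (n + 1) * T := by
  rw [VectorField.lieBracketWithin_eq, fun_iteratedFDerivWithin_sub_apply
    (contDiffOn_fderivWithin_apply_field hs hV hW x hx)
    (contDiffOn_fderivWithin_apply_field hs hW hV x hx) hs hx]
  calc ‖iteratedFDerivWithin ℝ n (fun y => fderivWithin ℝ W s y (V y)) s x -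
        iteratedFDerivWithin ℝ n (fun y => fderivWithin ℝ V s y (W y)) s x‖
      ≤ 2 ^ n * T + 2 ^ n * T :=
        (norm_sub_le _ _).trans <| add_le_add
          (norm_iteratedFDerivWithin_fderivWithin_apply_le hs hV hW hx hT)
          (norm_iteratedFDerivWithin_fderivWithin_apply_le hs hW hV hx fun i j hij => by
            rw [mul_comm]; exact hT j i (by lia))
    _ = 2 ^ (n + 1) * T := by ring

end Leibniz

section WeightedNorm

theorem norm_zpow_neg_mul_le_iff {E : Type*} [NormedAddCommGroup E] {x : E} (hx : x ≠ 0)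
    {k : ℕ} {a T : ℝ} :
    ‖x‖ ^ (-(k : ℤ)) * a ≤ T ↔ a ≤ T * ‖x‖ ^ k := by
  rw [zpow_neg, zpow_natCast, inv_mul_le_iff₀ (pow_pos (norm_pos_iff.mpr hx) k), mul_comm]

variable {E F : Type*} [NormedAddCommGroup E] [NormedSpace ℝ E]
  [NormedAddCommGroup F] [NormedSpace ℝ F] {r : ℝ} {n k l : ℕ} {f : E → F}

/-- The weighted `C^n` norm `⟨f⟩_{n,k,r}` of a map on the closed ball of radius `r` of a normed
space, of which `flatVNorm` is the Euclidean case. It takes the junk value `0` when the supremum is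
infinite. -/
noncomputable def weightedCnNorm (r : ℝ) (n k : ℕ) (f : E → F) : ℝ :=
  ⨆ p : (closedBall (0 : E) r \ {0} : Set E) × Fin (n + 1),
    ‖(p.1 : E)‖ ^ (-(k : ℤ)) * ‖iteratedFDerivWithin ℝ p.2 f (closedBall 0 r) p.1‖

/-- The space of `C^n` maps on the closed ball of radius `r` whose weighted norm `⟨f⟩_{n,k,r}` is
finite. -/
structure MemWeightedCn (r : ℝ) (n k : ℕ) (f : E → F) : Prop where
  contDiffOn : ContDiffOn ℝ n f (closedBall 0 r)
  exists_bound : ∃ M, ∀ i ≤ n, ∀ x ∈ closedBall (0 : E) r \ {0},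
    ‖iteratedFDerivWithin ℝ i f (closedBall 0 r) x‖ ≤ M * ‖x‖ ^ k

theorem weightedCnNorm_nonneg : 0 ≤ weightedCnNorm r n k f :=
  Real.iSup_nonneg fun _ => by positivity

theorem weightedCnNorm_le {T : ℝ} (hT₀ : 0 ≤ T)
    (hT : ∀ i ≤ n, ∀ x ∈ closedBall (0 : E) r \ {0},
      ‖iteratedFDerivWithin ℝ i f (closedBall 0 r) x‖ ≤ T * ‖x‖ ^ k) :
    weightedCnNorm r n k f ≤ T :=
  Real.iSup_le (fun ⟨x, i⟩ => (norm_zpow_neg_mul_le_iff x.2.2).mpr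
    (hT i (Nat.le_of_lt_succ i.2) x x.2)) hT₀

theorem zero_mem_closure_closedBall_diff_singleton [Nontrivial E] (hr : 0 < r) :
    (0 : E) ∈ closure (closedBall 0 r \ {0}) := by
  have ball_mem : closedBall (0 : E) r ∈ nhdsWithin 0 {0}ᶜ :=
    mem_nhdsWithin_of_mem_nhds (closedBall_mem_nhds 0 hr)
  rw [mem_closure_iff_nhdsWithin_neBot, sdiff_eq, inter_comm, nhdsWithin_inter_of_mem' ball_mem]
  infer_instance

namespace MemWeightedCn

theorem mono (hf : MemWeightedCn r n k f) {i : ℕ} (hi : i ≤ n) : MemWeightedCn r i k f where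
  contDiffOn := hf.contDiffOn.of_le (by exact_mod_cast hi)
  exists_bound := hf.exists_bound.imp fun _ hM j hj => hM j (hj.trans hi)

theorem norm_iteratedFDerivWithin_le_of_ne_zero (hf : MemWeightedCn r n k f) {i : ℕ} (hi : i ≤ n)
    {x : E} (hx : x ∈ closedBall (0 : E) r \ {0}) :
    ‖iteratedFDerivWithin ℝ i f (closedBall 0 r) x‖ ≤ weightedCnNorm r n k f * ‖x‖ ^ k := by
  obtain ⟨M, hM⟩ := hf.exists_bound
  have bddAbove : BddAbove (range fun p : (closedBall (0 : E) r \ {0} : Set E) × Fin (n + 1) =>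
      ‖(p.1 : E)‖ ^ (-(k : ℤ)) * ‖iteratedFDerivWithin ℝ p.2 f (closedBall 0 r) p.1‖) := by
    refine ⟨M, ?_⟩
    rintro _ ⟨⟨y, j⟩, rfl⟩
    exact (norm_zpow_neg_mul_le_iff y.2.2).mpr (hM j (Nat.le_of_lt_succ j.2) y y.2)
  exact (norm_zpow_neg_mul_le_iff hx.2).mp
    (le_ciSup bddAbove (⟨x, hx⟩, ⟨i, Nat.lt_succ_of_le hi⟩))

theorem weightedCnNorm_mono (hf : MemWeightedCn r n k f) {i : ℕ} (hi : i ≤ n) :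
    weightedCnNorm r i k f ≤ weightedCnNorm r n k f :=
  weightedCnNorm_le weightedCnNorm_nonneg fun _ hj _ hx =>
    hf.norm_iteratedFDerivWithin_le_of_ne_zero (hj.trans hi) hx

theorem norm_iteratedFDerivWithin_le [Nontrivial E] (hr : 0 < r) (hf : MemWeightedCn r n k f)
    {x : E} (hx : x ∈ closedBall 0 r) :
    ‖iteratedFDerivWithin ℝ n f (closedBall 0 r) x‖ ≤ weightedCnNorm r n k f * ‖x‖ ^ k := by
  rcases eq_or_ne x 0 with rfl | hx₀
  · have derivative_continuous :=
      hf.contDiffOn.continuousOn_iteratedFDerivWithin le_rfl (uniqueDiffOn_closedBall 0 hr)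
    exact ContinuousWithinAt.closure_le (zero_mem_closure_closedBall_diff_singleton hr)
      ((derivative_continuous 0 hx).norm.mono sdiff_subset)
      (Continuous.continuousWithinAt (by fun_prop))
      fun y hy => hf.norm_iteratedFDerivWithin_le_of_ne_zero le_rfl hy
  · exact hf.norm_iteratedFDerivWithin_le_of_ne_zero le_rfl ⟨hx, hx₀⟩

theorem norm_iteratedFDerivWithin_le_mul_pow [Nontrivial E] (hr : 0 < r)
    (hf : MemWeightedCn r n k f) {R : ℝ} (hR : R ≤ r) {x : E} (hx : x ∈ closedBall 0 R) :
    ‖iteratedFDerivWithin ℝ n f (closedBall 0 r) x‖ ≤ weightedCnNorm r n k f * R ^ k :=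
  (hf.norm_iteratedFDerivWithin_le hr (closedBall_subset_closedBall hR hx)).trans <|
    mul_le_mul_of_nonneg_left
      (pow_le_pow_left₀ (norm_nonneg x) (mem_closedBall_zero_iff.mp hx) k) weightedCnNorm_nonneg

section Interpolation

variable [Nontrivial E] {i : ℕ} {h : ℝ} {x : E}

theorem norm_iteratedFDerivWithin_succ_le_of_le (hr : 0 < r) (hf : MemWeightedCn r (i + 2) k f)
    {R : ℝ} (hR : R ≤ r) (hh : 0 < h) (hhR : h ≤ R) (hx : x ∈ closedBall 0 R) :
    ‖iteratedFDerivWithin ℝ (i + 1) f (closedBall 0 r) x‖ ≤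
      (weightedCnNorm r i k f / h + 2 * h * weightedCnNorm r (i + 2) k f) * R ^ k := by
  refine (norm_iteratedFDerivWithin_succ_le (uniqueDiffOn_closedBall 0 hr) hf.contDiffOn
    (closedBall_subset_closedBall hR) hh hhR
    (fun y hy => (hf.mono (by lia)).norm_iteratedFDerivWithin_le_mul_pow hr hR hy)
    (fun y hy => hf.norm_iteratedFDerivWithin_le_mul_pow hr hR hy) hx).trans_eq ?_
  ring

theorem norm_iteratedFDerivWithin_succ_le_of_norm_le (hr : 0 < r)
    (hf : MemWeightedCn r (i + 2) k f) (hk : k ≠ 0) (hx : x ∈ closedBall 0 r) (hxh : ‖x‖ ≤ h) :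
    ‖iteratedFDerivWithin ℝ (i + 1) f (closedBall 0 r) x‖ ≤
      h * weightedCnNorm r (i + 2) k f * ‖x‖ ^ k := by
  have hxr : ‖x‖ ≤ r := mem_closedBall_zero_iff.mp hx
  have hNorm : 0 ≤ weightedCnNorm r (i + 2) k f := weightedCnNorm_nonneg
  have eq_zero : iteratedFDerivWithin ℝ (i + 1) f (closedBall 0 r) 0 = 0 := by
    simpa [hk] using
      (hf.mono (Nat.le_succ _)).norm_iteratedFDerivWithin_le hr (mem_closedBall_self hr.le)
  have sub_le := norm_iteratedFDerivWithin_sub_le (uniqueDiffOn_closedBall 0 hr) hf.contDiffOn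
    (convex_closedBall 0 ‖x‖) (closedBall_subset_closedBall hxr)
    (fun y hy => hf.norm_iteratedFDerivWithin_le_mul_pow hr hxr hy)
    (mem_closedBall_self (norm_nonneg x)) (mem_closedBall_zero_iff.mpr le_rfl)
  rw [eq_zero, sub_zero, sub_zero] at sub_le
  calc ‖iteratedFDerivWithin ℝ (i + 1) f (closedBall 0 r) x‖
      ≤ weightedCnNorm r (i + 2) k f * ‖x‖ ^ k * ‖x‖ := sub_le
    _ ≤ weightedCnNorm r (i + 2) k f * ‖x‖ ^ k * h := by gcongr
    _ = h * weightedCnNorm r (i + 2) k f * ‖x‖ ^ k := by ring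

theorem norm_iteratedFDerivWithin_succ_le_unweighted (hr : 0 < r)
    (hf : MemWeightedCn r (i + 2) 0 f) (hh₀ : 0 < h) (hh₁ : h ≤ 1) (hx : x ∈ closedBall 0 r) :
    ‖iteratedFDerivWithin ℝ (i + 1) f (closedBall 0 r) x‖ ≤
      2 * (1 + 1 / r) * (weightedCnNorm r i 0 f / h + h * weightedCnNorm r (i + 2) 0 f) := by
  have hN : 0 ≤ weightedCnNorm r i 0 f := weightedCnNorm_nonneg
  have hN₂ : 0 ≤ weightedCnNorm r (i + 2) 0 f := weightedCnNorm_nonneg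
  -- Unlike `h`, this radius also fits in the ball when `r < 1`.
  set ρ := h / (1 + 1 / r)
  have one_le : 1 ≤ 1 + 1 / r := le_add_of_nonneg_right (by positivity)
  have hρ : ρ ≤ h := div_le_self hh₀.le one_le
  have hρr : ρ ≤ r := by
    rw [div_le_iff₀ (by positivity)]
    have : r * (1 + 1 / r) = r + 1 := by field_simp
    linarith
  calc ‖iteratedFDerivWithin ℝ (i + 1) f (closedBall 0 r) x‖
      ≤ weightedCnNorm r i 0 f / ρ + 2 * ρ * weightedCnNorm r (i + 2) 0 f := by
        simpa using hf.norm_iteratedFDerivWithin_succ_le_of_le hr le_rfl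
          (show 0 < ρ by positivity) hρr hx
    _ = (1 + 1 / r) * (weightedCnNorm r i 0 f / h) + 2 * ρ * weightedCnNorm r (i + 2) 0 f := by
        simp only [ρ]; field_simp
    _ ≤ 2 * (1 + 1 / r) * (weightedCnNorm r i 0 f / h) +
          2 * (1 + 1 / r) * (h * weightedCnNorm r (i + 2) 0 f) := by
        rw [mul_assoc 2 ρ, mul_assoc 2 (1 + 1 / r), mul_assoc 2 (1 + 1 / r)]
        exact add_le_add (le_mul_of_one_le_left (by positivity) one_le_two)
          (mul_le_mul_of_nonneg_left ((mul_le_mul_of_nonneg_right hρ hN₂).trans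
            (le_mul_of_one_le_left (by positivity) one_le)) zero_le_two)
    _ = _ := by ring

theorem norm_iteratedFDerivWithin_succ_le_weighted (hr : 0 < r)
    (hf : MemWeightedCn r (i + 2) k f) (hh₀ : 0 < h) (hh₁ : h ≤ 1) (hx : x ∈ closedBall 0 r) :
    ‖iteratedFDerivWithin ℝ (i + 1) f (closedBall 0 r) x‖ ≤
      2 * (1 + 1 / r) * (weightedCnNorm r i k f / h + h * weightedCnNorm r (i + 2) k f) *
        ‖x‖ ^ k := by
  rcases eq_or_ne k 0 with rfl | hk
  · simpa using hf.norm_iteratedFDerivWithin_succ_le_unweighted hr hh₀ hh₁ hx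
  have hN : 0 ≤ weightedCnNorm r i k f / h := div_nonneg weightedCnNorm_nonneg hh₀.le
  have hN₂ : 0 ≤ h * weightedCnNorm r (i + 2) k f := mul_nonneg hh₀.le weightedCnNorm_nonneg
  have le_const : 2 * (weightedCnNorm r i k f / h + h * weightedCnNorm r (i + 2) k f) ≤
      2 * (1 + 1 / r) * (weightedCnNorm r i k f / h + h * weightedCnNorm r (i + 2) k f) := by
    gcongr
    exact le_mul_of_one_le_right zero_le_two (le_add_of_nonneg_right (by positivity))
  rcases le_total h ‖x‖ with hle | hle
  · refine (hf.norm_iteratedFDerivWithin_succ_le_of_le hr (mem_closedBall_zero_iff.mp hx) hh₀ hle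
      (mem_closedBall_zero_iff.mpr le_rfl)).trans ?_
    exact mul_le_mul_of_nonneg_right (by linarith) (by positivity)
  · refine (hf.norm_iteratedFDerivWithin_succ_le_of_norm_le hr hk hx hle).trans ?_
    exact mul_le_mul_of_nonneg_right (by linarith) (by positivity)

theorem weightedCnNorm_succ_le (hr : 0 < r) (hf : MemWeightedCn r (i + 2) k f) (hh₀ : 0 < h)
    (hh₁ : h ≤ 1) :
    weightedCnNorm r (i + 1) k f ≤
      2 * (1 + 1 / r) * (weightedCnNorm r i k f / h + h * weightedCnNorm r (i + 2) k f) := by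
  have hN : 0 ≤ weightedCnNorm r i k f := weightedCnNorm_nonneg
  have hN₂ : 0 ≤ weightedCnNorm r (i + 2) k f := weightedCnNorm_nonneg
  refine weightedCnNorm_le (by positivity) fun j hj x hx => ?_
  rcases hj.eq_or_lt with rfl | hj
  · exact hf.norm_iteratedFDerivWithin_succ_le_weighted hr hh₀ hh₁ hx.1
  · refine ((hf.mono (by lia)).norm_iteratedFDerivWithin_le_of_ne_zero
      (Nat.le_of_lt_succ hj) hx).trans ?_
    gcongr
    calc weightedCnNorm r i k f ≤ weightedCnNorm r i k f / h := le_div_self hN hh₀ hh₁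
      _ ≤ weightedCnNorm r i k f / h + h * weightedCnNorm r (i + 2) k f :=
          le_add_of_nonneg_right (by positivity)
      _ ≤ _ := le_mul_of_one_le_left (by positivity) (by linarith [one_div_pos.mpr hr])

theorem sq_weightedCnNorm_succ_le (hr : 0 < r) (hf : MemWeightedCn r (i + 2) k f) :
    weightedCnNorm r (i + 1) k f ^ 2 ≤
      (4 * (1 + 1 / r)) ^ 2 * (weightedCnNorm r i k f * weightedCnNorm r (i + 2) k f) := by
  rw [show 4 * (1 + 1 / r) = 2 * (2 * (1 + 1 / r)) by ring]
  exact sq_le_of_forall_le_div_add_mul weightedCnNorm_nonneg (hf.weightedCnNorm_mono (by lia))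
    weightedCnNorm_nonneg (by positivity) fun _ hh₀ hh₁ => hf.weightedCnNorm_succ_le hr hh₀ hh₁

theorem weightedCnNorm_mul_le {G : Type*} [NormedAddCommGroup G] [NormedSpace ℝ G] {g : E → G}
    (hr : 0 < r) (hf : MemWeightedCn r n k f) (hg : MemWeightedCn r n l g) {i j : ℕ}
    (hij : i + j ≤ n) :
    weightedCnNorm r i k f * weightedCnNorm r j l g ≤ (4 * (1 + 1 / r)) ^ n ^ 2 *
      (weightedCnNorm r 0 k f * weightedCnNorm r n l g +
        weightedCnNorm r n k f * weightedCnNorm r 0 l g) :=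
  calc weightedCnNorm r i k f * weightedCnNorm r j l g
      ≤ weightedCnNorm r i k f * weightedCnNorm r (n - i) l g :=
        mul_le_mul_of_nonneg_left ((hg.mono (n.sub_le i)).weightedCnNorm_mono (by lia))
          weightedCnNorm_nonneg
    _ ≤ _ := mul_le_pow_mul_add_of_sq_le (a := fun p => weightedCnNorm r p k f)
        (b := fun p => weightedCnNorm r p l g) (fun _ => weightedCnNorm_nonneg)
        (fun _ => weightedCnNorm_nonneg) (by linarith [one_div_pos.mpr hr])
        (fun p hp => (hf.mono hp).sq_weightedCnNorm_succ_le hr)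
        (fun p hp => (hg.mono hp).sq_weightedCnNorm_succ_le hr) (by lia)

end Interpolation

end MemWeightedCn

theorem memWeightedCn_zero_of_contDiffOn [ProperSpace E] (hr : 0 < r)
    (hf : ContDiffOn ℝ n f (closedBall 0 r)) : MemWeightedCn r n 0 f := by
  have bounded : ∀ i ≤ n, ∃ M, ∀ x ∈ closedBall (0 : E) r,
      ‖iteratedFDerivWithin ℝ i f (closedBall 0 r) x‖ ≤ M := fun i hi =>
    (isCompact_closedBall 0 r).exists_bound_of_continuousOn
      (hf.continuousOn_iteratedFDerivWithin (by exact_mod_cast hi) (uniqueDiffOn_closedBall 0 hr))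
  choose! M hM using bounded
  obtain ⟨M', hM'⟩ := ((finite_Iic n).image M).bddAbove
  refine ⟨hf, M', fun i hi x hx => ?_⟩
  rw [pow_zero, mul_one]
  exact (hM i hi x hx.1).trans (hM' (mem_image_of_mem M hi))

theorem memWeightedCn_of_iteratedFDerivWithin_zero_eq_zero [ProperSpace E] (hr : 0 < r)
    (hf : ContDiffOn ℝ (n + k : ℕ) f (closedBall 0 r))
    (hf₀ : ∀ i ≤ n + k, iteratedFDerivWithin ℝ i f (closedBall 0 r) 0 = 0) :
    MemWeightedCn r n k f := by
  induction k generalizing n with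
  | zero => exact memWeightedCn_zero_of_contDiffOn hr hf
  | succ k ih =>
    rw [← Nat.succ_add_eq_add_succ] at hf hf₀
    obtain ⟨M, hM⟩ := (ih hf hf₀).exists_bound
    refine ⟨hf.of_le (by norm_cast; lia), M, fun i hi x hx => ?_⟩
    have hxr : ‖x‖ ≤ r := mem_closedBall_zero_iff.mp hx.1
    have hx_pos : 0 < ‖x‖ := norm_pos_iff.mpr hx.2
    have hM₀ : 0 ≤ M := nonneg_of_mul_nonneg_left
      ((norm_nonneg _).trans (hM 0 (Nat.zero_le _) x hx)) (by positivity)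
    have next_le : ∀ y ∈ closedBall (0 : E) ‖x‖,
        ‖iteratedFDerivWithin ℝ (i + 1) f (closedBall 0 r) y‖ ≤ M * ‖x‖ ^ k := by
      intro y hy
      rcases eq_or_ne y 0 with rfl | hy₀
      · rw [hf₀ _ (by lia), norm_zero]
        positivity
      · refine (hM (i + 1) (by lia) y ⟨closedBall_subset_closedBall hxr hy, hy₀⟩).trans ?_
        gcongr
        exact mem_closedBall_zero_iff.mp hy
    have sub_le := norm_iteratedFDerivWithin_sub_le (uniqueDiffOn_closedBall 0 hr)
      (hf.of_le (by norm_cast; lia)) (convex_closedBall 0 ‖x‖) (closedBall_subset_closedBall hxr)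
      next_le (mem_closedBall_self (norm_nonneg x)) (mem_closedBall_zero_iff.mpr le_rfl)
    rwa [hf₀ i (by lia), sub_zero, sub_zero, mul_assoc, ← pow_succ] at sub_le

/-- The constant of the bracket estimate: `2 ^ (n + 1)` counts the Leibniz terms and the other
factor is the loss in log-convexity. -/
noncomputable def lieBracketConst (n : ℕ) (r : ℝ) : ℝ :=
  2 ^ (n + 1) * (4 * (1 + 1 / r)) ^ (n + 1) ^ 2

theorem lieBracketConst_pos (n : ℕ) (hr : 0 < r) : 0 < lieBracketConst n r := by
  unfold lieBracketConst
  positivity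

theorem continuousOn_lieBracketConst (n : ℕ) : ContinuousOn (lieBracketConst n) (Ioi 0) := by
  have inv_continuous : ContinuousOn (fun r : ℝ => 1 / r) (Ioi 0) :=
    continuousOn_const.div continuousOn_id fun _ hr => ne_of_gt hr
  unfold lieBracketConst
  fun_prop

theorem lie_bracket_estimate_general [Nontrivial E] (hr : 0 < r) {V W : E → E}
    (hV : MemWeightedCn r (n + 1) k V) (hW : MemWeightedCn r (n + 1) l W) :
    weightedCnNorm r n (k + l) (VectorField.lieBracketWithin ℝ V W (closedBall 0 r)) ≤
      lieBracketConst n r * (weightedCnNorm r 0 k V * weightedCnNorm r (n + 1) l W +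
        weightedCnNorm r (n + 1) k V * weightedCnNorm r 0 l W) := by
  set Q := weightedCnNorm r 0 k V * weightedCnNorm r (n + 1) l W +
    weightedCnNorm r (n + 1) k V * weightedCnNorm r 0 l W
  have hQ : 0 ≤ Q := add_nonneg (mul_nonneg weightedCnNorm_nonneg weightedCnNorm_nonneg)
    (mul_nonneg weightedCnNorm_nonneg weightedCnNorm_nonneg)
  refine weightedCnNorm_le (mul_nonneg (lieBracketConst_pos n hr).le hQ) fun p hp x hx => ?_
  have product_le : ∀ i j, i + j = p + 1 →
      ‖iteratedFDerivWithin ℝ i V (closedBall 0 r) x‖ *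
        ‖iteratedFDerivWithin ℝ j W (closedBall 0 r) x‖ ≤
      (4 * (1 + 1 / r)) ^ (n + 1) ^ 2 * Q * ‖x‖ ^ (k + l) := fun i j hij =>
    calc ‖iteratedFDerivWithin ℝ i V (closedBall 0 r) x‖ *
          ‖iteratedFDerivWithin ℝ j W (closedBall 0 r) x‖
        ≤ (weightedCnNorm r i k V * ‖x‖ ^ k) * (weightedCnNorm r j l W * ‖x‖ ^ l) :=
          mul_le_mul ((hV.mono (by lia)).norm_iteratedFDerivWithin_le hr hx.1)
            ((hW.mono (by lia)).norm_iteratedFDerivWithin_le hr hx.1) (norm_nonneg _)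
            (mul_nonneg weightedCnNorm_nonneg (by positivity))
      _ = weightedCnNorm r i k V * weightedCnNorm r j l W * ‖x‖ ^ (k + l) := by ring
      _ ≤ _ := mul_le_mul_of_nonneg_right
          (hV.weightedCnNorm_mul_le hr hW (show i + j ≤ n + 1 by lia)) (by positivity)
  calc ‖iteratedFDerivWithin ℝ p (VectorField.lieBracketWithin ℝ V W (closedBall 0 r))
        (closedBall 0 r) x‖
      ≤ 2 ^ (p + 1) * ((4 * (1 + 1 / r)) ^ (n + 1) ^ 2 * Q * ‖x‖ ^ (k + l)) :=
        norm_iteratedFDerivWithin_lieBracketWithin_le (uniqueDiffOn_closedBall 0 hr)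
          (hV.mono (by lia)).contDiffOn (hW.mono (by lia)).contDiffOn hx.1 product_le
    _ ≤ 2 ^ (n + 1) * ((4 * (1 + 1 / r)) ^ (n + 1) ^ 2 * Q * ‖x‖ ^ (k + l)) := by
        gcongr
        exact one_le_two
    _ = lieBracketConst n r * Q * ‖x‖ ^ (k + l) := by rw [lieBracketConst]; ring

end WeightedNorm

theorem SmoothVF.contDiffOn {m : ℕ} {r : ℝ}
    {V : EuclideanSpace ℝ (Fin m) → EuclideanSpace ℝ (Fin m)} (hV : SmoothVF m r V) (n : ℕ) :
    ContDiffOn ℝ n V (closedBall 0 r) :=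
  hV.of_le (by exact_mod_cast le_top)

theorem FlatVF.memWeightedCn {m : ℕ} {r : ℝ} (hr : 0 < r)
    {V : EuclideanSpace ℝ (Fin m) → EuclideanSpace ℝ (Fin m)} (hVf : FlatVF m r V)
    (hV : SmoothVF m r V) (n k : ℕ) : MemWeightedCn r n k V :=
  memWeightedCn_of_iteratedFDerivWithin_zero_eq_zero hr (hV.contDiffOn _) fun i _ => hVf i

/-- estimate for the Lie bracket: for all `n, k, l` there is a constant
`C(n,k,l,r) > 0`, depending continuously on `r > 0`, such that for flat smooth vector
fields `V, W` on `B̄_r`,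
`⟨[V,W]⟩_{n,k+l,r} ≤ C (⟨V⟩_{0,k,r} ⟨W⟩_{n+1,l,r} + ⟨V⟩_{n+1,k,r} ⟨W⟩_{0,l,r})`;
moreover for `l = 0` the same holds with `W` an arbitrary smooth vector field. -/
theorem lie_bracket_estimate (m : ℕ) (hm : 1 ≤ m) (n k l : ℕ) :
    ∃ C : ℝ → ℝ, ContinuousOn C (Set.Ioi 0) ∧
      ∀ r : ℝ, 0 < r → 0 < C r ∧
        (∀ V W, SmoothVF m r V → FlatVF m r V → SmoothVF m r W → FlatVF m r W →
          flatVNorm m r n (k + l) (lieBracket m r V W) ≤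
            C r * (flatVNorm m r 0 k V * flatVNorm m r (n + 1) l W +
              flatVNorm m r (n + 1) k V * flatVNorm m r 0 l W)) ∧
        (∀ V W, SmoothVF m r V → FlatVF m r V → SmoothVF m r W →
          flatVNorm m r n k (lieBracket m r V W) ≤
            C r * (flatVNorm m r 0 k V * flatVNorm m r (n + 1) 0 W +
              flatVNorm m r (n + 1) k V * flatVNorm m r 0 0 W)) := by
  have : Nonempty (Fin m) := Fin.pos_iff_nonempty.mp hm
  refine ⟨lieBracketConst n, continuousOn_lieBracketConst n, fun r hr =>
    ⟨lieBracketConst_pos n hr, fun V W hV hVf hW hWf => ?_, fun V W hV hVf hW => ?_⟩⟩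
  · exact lie_bracket_estimate_general hr (hVf.memWeightedCn hr hV _ k)
      (hWf.memWeightedCn hr hW _ l)
  · exact lie_bracket_estimate_general hr (hVf.memWeightedCn hr hV _ k)
      (memWeightedCn_zero_of_contDiffOn hr (hW.contDiffOn _))
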